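/- arXiv:2212.01926 — 3 statements merged into one kernel-verified Lean document; each statement's English description precedes it below -/
import Mathlib

section
/- Let A be a finite nonempty alphabet, ν a shift-invariant probability measure on A^ℕ, and for 1 ≤ ℓ ≤ h let Q_ℓ be the memory-ℓ Markov model word probability on A^{h+1} built from ν, namely Q_ℓ(w) = ν[w_0…w_{ℓ-1}] · ∏_{k=0}^{h-ℓ} ν[w_k…w_{k+ℓ}] / ν[w_k…w_{k+ℓ-1}] (and 0 if some denominator vanishes). Then for all 1 ≤ ℓ < ℓ' ≤ h and every w ∈ A^{h+1}, Q_{ℓ'}(w) > 0 implies Q_ℓ(w) > 0. Consequently the h-step behaviour of the memory-ℓ' model is contained in that of the memory-ℓ model, and the behavioural metric d_h(Σ_ℓ, Σ_{ℓ'}) reduces to the single term Q_ℓ({w : Q_ℓ(w) > 0 and Q_{ℓ'}(w) = 0}). -/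
open scoped Classical ENNReal
open MeasureTheory

/-- The measure of the length-`m` cylinder determined by the word `u` (only its first `m`
letters matter). -/
noncomputable def cylMeas {A : Type} [MeasurableSpace A]
    (ν : Measure (ℕ → A)) (m : ℕ) (u : ℕ → A) : ℝ≥0∞ :=
  ν {ω : ℕ → A | ∀ i < m, ω i = u i}

/-- The memory-`ℓ` Markov model word probability of a length-`h+1` word `w` built from the
stationary output process `ν`:
`Q_ℓ(w) = ν[w_0…w_{ℓ-1}] · ∏_{k=0}^{h-ℓ} ν[w_k…w_{k+ℓ}] / ν[w_k…w_{k+ℓ-1}]`,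
set to `0` whenever some factor's denominator vanishes. -/
noncomputable def memQ {A : Type} [MeasurableSpace A]
    (ν : Measure (ℕ → A)) (ℓ h : ℕ) (w : ℕ → A) : ℝ≥0∞ :=
  if ∀ k ≤ h - ℓ, cylMeas ν ℓ (fun i => w (k + i)) ≠ 0 then
    cylMeas ν ℓ w * ∏ k ∈ Finset.range (h - ℓ + 1),
      cylMeas ν (ℓ + 1) (fun i => w (k + i)) / cylMeas ν ℓ (fun i => w (k + i))
  else 0

/-!
`Q_ℓ(w)` is positive exactly when all windows of length `ℓ + 1` of `w` have positive measure.
Every such window lies in a window of length `ℓ' + 1` as long as `ℓ ≤ ℓ' ≤ h`, and a factor of a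
word of positive measure has positive measure: lengthening a word shrinks its cylinder, and the
shift pulls null sets back to null sets.
-/

open Measure

/-- The left shift on one-sided sequences, the time evolution of an output process. -/
def leftShift {A : Type*} (ω : ℕ → A) : ℕ → A := fun n => ω (n + 1)

lemma iterate_leftShift {A : Type*} (k : ℕ) (ω : ℕ → A) :
    leftShift^[k] ω = fun i => ω (k + i) := by
  induction k generalizing ω with
  | zero => simp only [Function.iterate_zero, id_eq, Nat.zero_add]
  | succ k ih =>
    rw [Function.iterate_succ_apply, ih]
    funext i
    exact congrArg ω (Nat.add_right_comm k i 1)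

lemma measurable_leftShift {A : Type*} [MeasurableSpace A] :
    Measurable (leftShift : (ℕ → A) → ℕ → A) :=
  measurable_pi_lambda _ fun n => measurable_pi_apply (n + 1)

section Cylinder

variable {A : Type} [MeasurableSpace A] {ν : Measure (ℕ → A)}

lemma antitone_cylMeas (u : ℕ → A) : Antitone fun m => cylMeas ν m u :=
  fun _ _ hmn => measure_mono fun _ hω i hi => hω i (hi.trans_le hmn)

lemma cylMeas_drop_ne_zero (hν : QuasiMeasurePreserving leftShift ν ν) {k n : ℕ} {u : ℕ → A}
    (hu : cylMeas ν (k + n) u ≠ 0) : cylMeas ν n (fun i => u (k + i)) ≠ 0 := by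
  refine fun hzero => hu (measure_mono_null ?_ ((hν.iterate k).preimage_null hzero))
  intro ω hω i hi
  rw [iterate_leftShift]
  exact hω (k + i) (Nat.add_lt_add_left hi k)

lemma cylMeas_window_ne_zero (hν : QuasiMeasurePreserving leftShift ν ν) {j k m n : ℕ}
    {w : ℕ → A} (hjk : j ≤ k) (hend : k + n ≤ j + m)
    (hw : cylMeas ν m (fun i => w (j + i)) ≠ 0) : cylMeas ν n (fun i => w (k + i)) ≠ 0 := by
  obtain ⟨d, rfl⟩ := Nat.exists_eq_add_of_le hjk
  have hprefix : cylMeas ν (d + n) (fun i => w (j + i)) ≠ 0 :=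
    ne_bot_of_le_ne_bot hw (antitone_cylMeas _ (by omega))
  simpa only [Nat.add_assoc] using cylMeas_drop_ne_zero hν hprefix

end Cylinder

section MarkovModel

variable {A : Type} [MeasurableSpace A] {ν : Measure (ℕ → A)} [IsFiniteMeasure ν] {ℓ ℓ' h : ℕ}

lemma memQ_pos_iff (hℓ : ℓ ≤ h) (w : ℕ → A) :
    0 < memQ ν ℓ h w ↔ ∀ k, k + ℓ ≤ h → cylMeas ν (ℓ + 1) (fun i => w (k + i)) ≠ 0 := by
  have hfactor (k : ℕ) :
      cylMeas ν (ℓ + 1) (fun i => w (k + i)) / cylMeas ν ℓ (fun i => w (k + i)) ≠ 0 ↔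
        cylMeas ν (ℓ + 1) (fun i => w (k + i)) ≠ 0 :=
    ENNReal.div_ne_zero.trans (and_iff_left (measure_ne_top ν _))
  have hdenominator {k : ℕ} (hk : cylMeas ν (ℓ + 1) (fun i => w (k + i)) ≠ 0) :
      cylMeas ν ℓ (fun i => w (k + i)) ≠ 0 :=
    ne_bot_of_le_ne_bot hk (antitone_cylMeas _ ℓ.le_succ)
  simp only [memQ, pos_iff_ne_zero, ite_ne_right_iff, mul_ne_zero_iff, Finset.prod_ne_zero_iff,
    Finset.mem_range, Nat.lt_succ_iff, hfactor, Nat.le_sub_iff_add_le hℓ]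
  refine ⟨fun ⟨_, _, hwindow⟩ => hwindow,
    fun hwindow => ⟨fun k hk => hdenominator (hwindow k hk), ?_, hwindow⟩⟩
  simpa only [Nat.zero_add] using hdenominator (hwindow 0 (by omega))

lemma memQ_pos_of_le (hν : QuasiMeasurePreserving leftShift ν ν) (hℓℓ' : ℓ ≤ ℓ') (hℓ'h : ℓ' ≤ h)
    {w : ℕ → A} (hw : 0 < memQ ν ℓ' h w) : 0 < memQ ν ℓ h w := by
  rw [memQ_pos_iff hℓ'h] at hw
  rw [memQ_pos_iff (hℓℓ'.trans hℓ'h)]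
  intro k hk
  -- The long window starts at `k` too, unless it would then run past the end of the word.
  have hlong := hw (min k (h - ℓ')) (by omega)
  exact cylMeas_window_ne_zero hν (min_le_left _ _) (by omega) hlong

end MarkovModel

section BehaviouralMetric

variable {ι : Type*}

/-- The mass that the weights `p` put on points where `p` is positive and `q` vanishes. For word
probabilities this is one of the two terms of the behavioural metric. -/
noncomputable def massOutside (p q : ι → ℝ≥0∞) : ℝ≥0∞ :=
  ∑' i, if 0 < p i ∧ q i = 0 then p i else 0

/-- The behavioural metric `d_h` between two models, given by their word probabilities. -/
noncomputable def behaviouralDist (p q : ι → ℝ≥0∞) : ℝ≥0∞ :=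
  massOutside p q + massOutside q p

lemma massOutside_eq_zero {p q : ι → ℝ≥0∞} (hpq : ∀ i, 0 < p i → 0 < q i) :
    massOutside p q = 0 :=
  ENNReal.tsum_eq_zero.2 fun i => if_neg fun hi => (hpq i hi.1).ne' hi.2

lemma behaviouralDist_eq_massOutside {p q : ι → ℝ≥0∞} (hqp : ∀ i, 0 < q i → 0 < p i) :
    behaviouralDist p q = massOutside p q := by
  rw [behaviouralDist, massOutside_eq_zero hqp, add_zero]

/-- The word probability `Q_ℓ` on `A^{h+1}`. As `memQ` takes infinite sequences, a word is continued
by its first letter; `memQ` does not see the continuation when `ℓ ≤ h`. -/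
noncomputable def wordProb {A : Type} [MeasurableSpace A] (ν : Measure (ℕ → A)) (ℓ h : ℕ)
    (w : Fin (h + 1) → A) : ℝ≥0∞ :=
  memQ ν ℓ h fun i => if hi : i < h + 1 then w ⟨i, hi⟩ else w ⟨0, Nat.succ_pos h⟩

end BehaviouralMetric

theorem stmt2_general {A : Type} [MeasurableSpace A] {ν : Measure (ℕ → A)} [IsFiniteMeasure ν]
    (hν : QuasiMeasurePreserving leftShift ν ν) {ℓ ℓ' h : ℕ} (hℓℓ' : ℓ ≤ ℓ') (hℓ'h : ℓ' ≤ h) :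
    {w : ℕ → A | 0 < memQ ν ℓ' h w} ⊆ {w : ℕ → A | 0 < memQ ν ℓ h w} ∧
      behaviouralDist (wordProb ν ℓ h) (wordProb ν ℓ' h) =
        massOutside (wordProb ν ℓ h) (wordProb ν ℓ' h) :=
  ⟨fun _ => memQ_pos_of_le hν hℓℓ' hℓ'h,
    behaviouralDist_eq_massOutside fun _ => memQ_pos_of_le hν hℓℓ' hℓ'h⟩

/-- For a shift-invariant probability measure `ν` on `A^ℕ` and memories
`1 ≤ ℓ < ℓ' ≤ h`, every length-`h+1` word with positive memory-`ℓ'` model probability also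
has positive memory-`ℓ` model probability; hence the `h`-step behaviour of the memory-`ℓ'`
model is contained in that of the memory-`ℓ` model and the behavioural metric
`d_h(Σ_ℓ, Σ_{ℓ'})` reduces to the single term `Q_ℓ({w : Q_ℓ(w) > 0 ∧ Q_{ℓ'}(w) = 0})`. -/
theorem stmt2 (A : Type) [Fintype A] [Nonempty A]
    [MeasurableSpace A] [MeasurableSingletonClass A]
    (ν : Measure (ℕ → A)) [IsProbabilityMeasure ν]
    (hshift : ν.map (fun ω n => ω (n + 1)) = ν)
    (ℓ ℓ' h : ℕ) (hℓ : 1 ≤ ℓ) (hℓℓ' : ℓ < ℓ') (hℓ'h : ℓ' ≤ h) :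
    (∀ w : ℕ → A, 0 < memQ ν ℓ' h w → 0 < memQ ν ℓ h w) ∧
    {w : ℕ → A | 0 < memQ ν ℓ' h w} ⊆ {w : ℕ → A | 0 < memQ ν ℓ h w} ∧
    ∀ ext : (Fin (h + 1) → A) → (ℕ → A),
      (ext = fun w i => if hi : i < h + 1 then w ⟨i, hi⟩ else w ⟨0, Nat.succ_pos h⟩) →
      (∑ w : Fin (h + 1) → A,
          if 0 < memQ ν ℓ h (ext w) ∧ memQ ν ℓ' h (ext w) = 0 then memQ ν ℓ h (ext w) else 0) +
        (∑ w : Fin (h + 1) → A,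
          if 0 < memQ ν ℓ' h (ext w) ∧ memQ ν ℓ h (ext w) = 0 then memQ ν ℓ' h (ext w) else 0) =
      ∑ w : Fin (h + 1) → A,
          if 0 < memQ ν ℓ h (ext w) ∧ memQ ν ℓ' h (ext w) = 0 then memQ ν ℓ h (ext w) else 0 := by
  obtain ⟨hsub, hdist⟩ :=
    stmt2_general ⟨measurable_leftShift, absolutelyContinuous_of_eq hshift⟩ hℓℓ'.le hℓ'h
  simp only [behaviouralDist, massOutside, tsum_fintype] at hdist
  exact ⟨hsub, hsub, fun _ hext => hext ▸ hdist⟩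
end

section
/- Let X be a separable metric space equipped with its Borel σ-algebra, let P and P' be probability measures on X, and let C_1, …, C_m be a finite Borel partition of X such that P(C_i) = P'(C_i) for every i and each C_i is bounded. Then there exists a probability measure γ on X × X whose first marginal is P and whose second marginal is P', such that γ(⋃_{i=1}^m C_i × C_i) = 1; in particular, for γ-almost every pair (x, x'), dist(x, x') ≤ max_{1 ≤ i ≤ m} diam(C_i). Hence a random point distributed as P' can be written as a random point distributed as P plus a perturbation of norm at most the largest cell diameter. -/
open MeasureTheory

/-! On each cell take the product of the restrictions of `P` and `P'`, divided by the common mass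
of the cell: its marginals are exactly those restrictions. Summing over the cells restores `P` and
`P'`, and a pair drawn from a single cell is at distance at most the diameter of that cell. -/

open scoped ENNReal

section Measurable

variable {ι X Y : Type*} [MeasurableSpace X] [MeasurableSpace Y] {μ : Measure X} {ν : Measure Y}
  {C : ι → Set X} {D : ι → Set Y}

theorem sum_restrict_eq_self_of_partition [Countable ι] (hmeas : ∀ i, MeasurableSet (C i))
    (hdisj : Pairwise (Function.onFun Disjoint C)) (hcover : ⋃ i, C i = Set.univ) :
    Measure.sum (fun i => μ.restrict (C i)) = μ := by
  rw [← Measure.restrict_iUnion hdisj hmeas, hcover, Measure.restrict_univ]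

/-- The coupling of two finite measures of equal total mass that is proportional to their product.
Where the common mass is `0`, the factor `0⁻¹ = ∞` multiplies the zero measure. -/
noncomputable def normalizedProd (μ : Measure X) (ν : Measure Y) : Measure (X × Y) :=
  (μ Set.univ)⁻¹ • μ.prod ν

theorem fst_normalizedProd [IsFiniteMeasure μ] (hmass : μ Set.univ = ν Set.univ) :
    (normalizedProd μ ν).fst = μ := by
  have : IsFiniteMeasure ν := ⟨hmass ▸ measure_lt_top μ Set.univ⟩
  rw [normalizedProd, Measure.fst, Measure.map_smul, Measure.map_fst_prod, ← hmass, smul_smul]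
  rcases eq_or_ne μ 0 with rfl | hμ
  · exact smul_zero _
  · rw [ENNReal.inv_mul_cancel (Measure.measure_univ_ne_zero.mpr hμ) (measure_ne_top _ _), one_smul]

theorem snd_normalizedProd [IsFiniteMeasure μ] (hmass : μ Set.univ = ν Set.univ) :
    (normalizedProd μ ν).snd = ν := by
  have : IsFiniteMeasure ν := ⟨hmass ▸ measure_lt_top μ Set.univ⟩
  rw [normalizedProd, Measure.snd, Measure.map_smul, Measure.map_snd_prod, hmass, smul_smul]
  rcases eq_or_ne ν 0 with rfl | hν
  · exact smul_zero _
  · rw [ENNReal.inv_mul_cancel (Measure.measure_univ_ne_zero.mpr hν) (measure_ne_top _ _), one_smul]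

theorem fst_normalizedProd_restrict {s : Set X} {t : Set Y} (hfin : μ s ≠ ∞) (hmass : μ s = ν t) :
    (normalizedProd (μ.restrict s) (ν.restrict t)).fst = μ.restrict s := by
  have : IsFiniteMeasure (μ.restrict s) := isFiniteMeasure_restrict.mpr hfin
  exact fst_normalizedProd (by simpa only [Measure.restrict_apply_univ] using hmass)

theorem snd_normalizedProd_restrict {s : Set X} {t : Set Y} (hfin : μ s ≠ ∞) (hmass : μ s = ν t) :
    (normalizedProd (μ.restrict s) (ν.restrict t)).snd = ν.restrict t := by
  have : IsFiniteMeasure (μ.restrict s) := isFiniteMeasure_restrict.mpr hfin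
  exact snd_normalizedProd (by simpa only [Measure.restrict_apply_univ] using hmass)

/-- The coupling of `μ` and `ν` that first selects a cell index `i` and then draws the two
coordinates independently from the cells `C i` and `D i`, where `μ (C i) = ν (D i)`. -/
noncomputable def partitionCoupling (μ : Measure X) (ν : Measure Y) (C : ι → Set X)
    (D : ι → Set Y) : Measure (X × Y) :=
  Measure.sum fun i => normalizedProd (μ.restrict (C i)) (ν.restrict (D i))

theorem fst_partitionCoupling [Countable ι] (hmeas : ∀ i, MeasurableSet (C i))
    (hdisj : Pairwise (Function.onFun Disjoint C)) (hcover : ⋃ i, C i = Set.univ)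
    (hfin : ∀ i, μ (C i) ≠ ∞) (hmass : ∀ i, μ (C i) = ν (D i)) :
    (partitionCoupling μ ν C D).fst = μ := by
  simp only [partitionCoupling, Measure.fst_sum, fst_normalizedProd_restrict (hfin _) (hmass _),
    sum_restrict_eq_self_of_partition hmeas hdisj hcover]

theorem snd_partitionCoupling [Countable ι] (hmeas : ∀ i, MeasurableSet (D i))
    (hdisj : Pairwise (Function.onFun Disjoint D)) (hcover : ⋃ i, D i = Set.univ)
    (hfin : ∀ i, μ (C i) ≠ ∞) (hmass : ∀ i, μ (C i) = ν (D i)) :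
    (partitionCoupling μ ν C D).snd = ν := by
  simp only [partitionCoupling, Measure.snd_sum, snd_normalizedProd_restrict (hfin _) (hmass _),
    sum_restrict_eq_self_of_partition hmeas hdisj hcover]

theorem ae_mem_prod_normalizedProd {s : Set X} {t : Set Y} (hs : ∀ᵐ x ∂μ, x ∈ s)
    (ht : ∀ᵐ y ∂ν, y ∈ t) : ∀ᵐ p ∂normalizedProd μ ν, p ∈ s ×ˢ t :=
  Measure.ae_smul_measure ((Measure.quasiMeasurePreserving_fst.ae hs).and
    (Measure.quasiMeasurePreserving_snd.ae ht)) _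

theorem ae_mem_iUnion_prod_partitionCoupling [Countable ι] (hC : ∀ i, MeasurableSet (C i))
    (hD : ∀ i, MeasurableSet (D i)) :
    ∀ᵐ p ∂partitionCoupling μ ν C D, p ∈ ⋃ i, C i ×ˢ D i := by
  refine Measure.ae_sum_iff.mpr fun i => ?_
  filter_upwards [ae_mem_prod_normalizedProd (ae_restrict_mem (hC i)) (ae_restrict_mem (hD i))]
    with p hp
  exact Set.mem_iUnion_of_mem i hp

end Measurable

section PseudoMetric

variable {ι X : Type*} [PseudoMetricSpace X] {C : ι → Set X}

theorem dist_le_iSup_diam_of_mem_iUnion_prod (hbdd : ∀ i, Bornology.IsBounded (C i))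
    (hdiam : BddAbove (Set.range fun i => Metric.diam (C i))) {p : X × X}
    (hp : p ∈ ⋃ i, C i ×ˢ C i) : dist p.1 p.2 ≤ ⨆ i, Metric.diam (C i) := by
  obtain ⟨i, hfst, hsnd⟩ := Set.mem_iUnion.mp hp
  exact (Metric.dist_le_diam_of_mem (hbdd i) hfst hsnd).trans (le_ciSup hdiam i)

theorem stmt6_general [Countable ι] [MeasurableSpace X] (P P' : Measure X) [IsProbabilityMeasure P]
    (hmeas : ∀ i, MeasurableSet (C i))
    (hdisj : Pairwise (Function.onFun Disjoint C))
    (hcover : ⋃ i, C i = Set.univ)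
    (hbdd : ∀ i, Bornology.IsBounded (C i))
    (hdiam : BddAbove (Set.range fun i => Metric.diam (C i)))
    (heq : ∀ i, P (C i) = P' (C i)) :
    ∃ γ : Measure (X × X), IsProbabilityMeasure γ ∧
      γ.map Prod.fst = P ∧ γ.map Prod.snd = P' ∧
      γ (⋃ i, C i ×ˢ C i) = 1 ∧
      ∀ᵐ p ∂γ, dist p.1 p.2 ≤ ⨆ i, Metric.diam (C i) := by
  set γ := partitionCoupling P P' C C
  have hfin : ∀ i, P (C i) ≠ ∞ := fun i => measure_ne_top P (C i)
  have hfst : γ.map Prod.fst = P := fst_partitionCoupling hmeas hdisj hcover hfin heq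
  have hsnd : γ.map Prod.snd = P' := snd_partitionCoupling hmeas hdisj hcover hfin heq
  have hcells : ∀ᵐ p ∂γ, p ∈ ⋃ i, C i ×ˢ C i := ae_mem_iUnion_prod_partitionCoupling hmeas hmeas
  have hprob : IsProbabilityMeasure γ :=
    have : IsProbabilityMeasure (γ.map Prod.fst) := hfst ▸ ‹IsProbabilityMeasure P›
    Measure.isProbabilityMeasure_of_map Prod.fst
  have hcells_meas : MeasurableSet (⋃ i, C i ×ˢ C i) :=
    .iUnion fun i => (hmeas i).prod (hmeas i)
  exact ⟨γ, hprob, hfst, hsnd, (mem_ae_iff_prob_eq_one hcells_meas).mp hcells,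
    hcells.mono fun _ => dist_le_iSup_diam_of_mem_iUnion_prod hbdd hdiam⟩

end PseudoMetric

/-- Let `X` be a separable metric space with its Borel σ-algebra, `P` and
`P'` probability measures on `X`, and `C_1, …, C_m` a finite Borel partition of `X` into
bounded cells with `P(C_i) = P'(C_i)` for every `i`. Then there is a coupling `γ` of `P`
and `P'` concentrated on `⋃_i C_i × C_i`; in particular `γ`-almost every pair `(x, x')`
satisfies `dist(x, x') ≤ max_i diam(C_i)`, i.e. a random point distributed as `P'` is a
random point distributed as `P` plus a perturbation of norm at most the largest cell
diameter. -/
theorem stmt6 (X : Type) [MetricSpace X] [TopologicalSpace.SeparableSpace X]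
    [MeasurableSpace X] [BorelSpace X]
    (P P' : Measure X) [IsProbabilityMeasure P] [IsProbabilityMeasure P']
    (m : ℕ) (C : Fin m → Set X)
    (hmeas : ∀ i, MeasurableSet (C i))
    (hdisj : Pairwise (Function.onFun Disjoint C))
    (hcover : ⋃ i, C i = Set.univ)
    (hbdd : ∀ i, Bornology.IsBounded (C i))
    (heq : ∀ i, P (C i) = P' (C i)) :
    ∃ γ : Measure (X × X), IsProbabilityMeasure γ ∧
      γ.map Prod.fst = P ∧ γ.map Prod.snd = P' ∧
      γ (⋃ i, C i ×ˢ C i) = 1 ∧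
      ∀ᵐ p ∂γ, dist p.1 p.2 ≤ ⨆ i, Metric.diam (C i) :=
  stmt6_general P P' hmeas hdisj hcover hbdd (Set.finite_range _).bddAbove heq
end

section
/- Let θ ∈ (0, 2π) be such that θ/(2π) is irrational, and consider the Sturmian system on [0, 2π) given by F(x) = x + θ (mod 2π), with output map H(x) = 0 if x ∈ [0, θ) and H(x) = 1 otherwise. If two points x, x' ∈ [0, 2π) produce identical output sequences, i.e. H(F^i(x)) = H(F^i(x')) for all i ∈ ℕ, then x = x'. In particular dist(F^l(x), F^l(x')) → 0 as l → ∞, so the Sturmian system is observable. -/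
open Filter

/-!
The output sequence of `x` records which points of its orbit lie in a fixed arc `[0, c)`.
The indicator of an arc `[a, c)`, viewed as a periodic function on `ℝ`, is right-locally constant,
so its values on a dense set determine it everywhere. Forward orbits of an irrational rotation are
dense, hence if `x` and `x'` have the same outputs, then translation by `x' - x` preserves the arc.
Only the trivial rotation preserves a proper arc, so `x = x'`.
-/

section

open Set Topology AddCommGroup

theorem eq_of_eqOn_dense_of_eventuallyEq_nhdsGE {X α : Type*} [TopologicalSpace X] [LinearOrder X]
    [OrderTopology X] [DenselyOrdered X] [NoMaxOrder X] {f g : X → α} {s : Set X} (hs : Dense s)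
    (hf : ∀ t, f =ᶠ[𝓝[≥] t] fun _ ↦ f t) (hg : ∀ t, g =ᶠ[𝓝[≥] t] fun _ ↦ g t)
    (h : EqOn f g s) : f = g := by
  funext t
  obtain ⟨b, htb, hb⟩ := mem_nhdsGE_iff_exists_Ico_subset.1 ((hf t).and (hg t))
  obtain ⟨u, hus, hu⟩ := hs.exists_between htb
  obtain ⟨hfu, hgu⟩ := hb (Ioo_subset_Ico_self hu)
  exact hfu.symm.trans ((h hus).trans hgu)

section toIcoMod

variable {G : Type*} [AddCommGroup G] [LinearOrder G] [IsOrderedAddMonoid G] [Archimedean G]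
  {p : G} (hp : 0 < p) {a c : G}

theorem iterate_toIcoMod_add (θ : G) {x : G} (hx : x ∈ Ico a (a + p)) (n : ℕ) :
    (fun y ↦ toIcoMod hp a (y + θ))^[n] x = toIcoMod hp a (x + n • θ) := by
  induction n with
  | zero => simpa using ((toIcoMod_eq_self hp).2 hx).symm
  | succ n ih =>
    rw [Function.iterate_succ_apply', ih, toIcoMod_inj, succ_nsmul, ← add_assoc]
    exact ((toIcoMod_inj hp).1 (toIcoMod_toIcoMod hp a a _)).add_right θ

theorem eventuallyEq_toIcoMod_lt_nhdsGE [TopologicalSpace G] [OrderTopology G] (t : G) :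
    (toIcoMod hp a · < c) =ᶠ[𝓝[≥] t] fun _ ↦ toIcoMod hp a t < c := by
  rcases lt_or_ge (toIcoMod hp a t) c with ht | ht
  · filter_upwards [(continuousWithinAt_toIcoMod_Ici hp a t).eventually_lt_const ht] with u hu
    exact propext (iff_of_true hu ht)
  · filter_upwards [eventuallyEq_toIcoDiv_nhdsGE hp a t, self_mem_nhdsWithin] with u hdiv htu
    have hmono : toIcoMod hp a t ≤ toIcoMod hp a u := by
      simpa only [toIcoMod, hdiv] using sub_le_sub_right htu _
    exact propext (iff_of_false (ht.trans hmono).not_gt ht.not_gt)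

theorem modEq_zero_of_toIcoMod_add_lt_iff (hc : c ∈ Ioo a (a + p)) {d : G}
    (h : ∀ t, toIcoMod hp a (t + d) < c ↔ toIcoMod hp a t < c) : d ≡ 0 [PMOD p] := by
  set b := toIcoMod hp a (a + d)
  have hbd : b ≡ a + d [PMOD p] := (toIcoMod_inj hp).1 (toIcoMod_toIcoMod hp a a _)
  have hbc : b < c := (h a).2 ((toIcoMod_apply_left hp a).trans_lt hc.1)
  rcases (left_le_toIcoMod hp a _ : a ≤ b).eq_or_lt with hab | hab
  · exact add_modEq_left.1 (hab ▸ hbd).symm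
  -- Translation by `d` moves `a` to `b`, hence `c - b + a ∈ (a, c)` to the endpoint `c`.
  · have hmem : c - b + a ∈ Ico a c := by grind
    have hstart : toIcoMod hp a (c - b + a) = c - b + a :=
      (toIcoMod_eq_self hp).2 (Ico_subset_Ico_right hc.2.le hmem)
    have hmod : c - b + a + d ≡ c [PMOD p] := by
      simpa [add_assoc] using hbd.symm.add_left (c - b)
    have hend : toIcoMod hp a (c - b + a + d) = c :=
      ((toIcoMod_inj hp).2 hmod).trans ((toIcoMod_eq_self hp).2 (Ioo_subset_Ico_self hc))
    exact absurd ((h _).2 (hstart.trans_lt hmem.2)) hend.not_lt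

end toIcoMod

theorem dense_setOf_add_nsmul_modEq {p θ : ℝ} (hp : 0 < p) (hirr : Irrational (θ / p)) (x : ℝ) :
    Dense {t | ∃ n : ℕ, x + n • θ ≡ t [PMOD p]} := by
  have : Fact (0 < p) := ⟨hp⟩
  have horbit : DenseRange fun n : ℕ ↦ n • (θ : AddCircle p) :=
    denseRange_zsmul_iff_nsmul.1 (AddCircle.denseRange_zsmul_coe_iff.2 hirr)
  have htranslate : DenseRange fun n : ℕ ↦ (x : AddCircle p) + n • (θ : AddCircle p) :=
    (Homeomorph.addLeft (x : AddCircle p)).surjective.denseRange.comp horbit (by fun_prop)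
  convert Dense.preimage htranslate QuotientAddGroup.isOpenMap_coe using 1
  ext t
  simp [modEq_iff_eq_mod_zmultiples]

theorem toIcoMod_add_sub_lt_iff_of_forall_nsmul {p θ a c x x' : ℝ} (hp : 0 < p)
    (hirr : Irrational (θ / p))
    (h : ∀ n : ℕ, toIcoMod hp a (x + n • θ) < c ↔ toIcoMod hp a (x' + n • θ) < c) (t : ℝ) :
    toIcoMod hp a (t + (x' - x)) < c ↔ toIcoMod hp a t < c := by
  suffices hfun : (fun t ↦ toIcoMod hp a (t + (x' - x)) < c) = fun t ↦ toIcoMod hp a t < c from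
    iff_of_eq (congrFun hfun t)
  refine eq_of_eqOn_dense_of_eventuallyEq_nhdsGE (dense_setOf_add_nsmul_modEq hp hirr x)
    (fun u ↦ ?_) (eventuallyEq_toIcoMod_lt_nhdsGE hp) ?_
  -- Translating the argument of `toIcoMod` amounts to translating the arc.
  · simp only [toIcoMod_add_right_eq_add, ← lt_sub_iff_add_lt]
    exact eventuallyEq_toIcoMod_lt_nhdsGE hp u
  · rintro u ⟨n, hn⟩
    have hn' : x' + n • θ ≡ u + (x' - x) [PMOD p] := by
      convert hn.add_right (x' - x) using 1
      abel
    simpa only [(toIcoMod_inj hp).2 hn, (toIcoMod_inj hp).2 hn'] using propext (h n).symm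

theorem stmt10_general {p θ c : ℝ} (hp : 0 < p) (hirr : Irrational (θ / p)) (hc : c ∈ Ioo 0 p)
    {F : ℝ → ℝ} (hF : ∀ x, F x = toIcoMod hp 0 (x + θ)) {x x' : ℝ} (hx : x ∈ Ico 0 p)
    (hx' : x' ∈ Ico 0 p) (hout : ∀ i : ℕ, F^[i] x ∈ Ico 0 c ↔ F^[i] x' ∈ Ico 0 c) : x = x' := by
  rw [← zero_add p] at hc hx hx'
  obtain rfl : F = fun y ↦ toIcoMod hp 0 (y + θ) := funext hF
  have horbit (n : ℕ) :
      toIcoMod hp 0 (x + n • θ) < c ↔ toIcoMod hp 0 (x' + n • θ) < c := by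
    simpa only [iterate_toIcoMod_add hp θ hx, iterate_toIcoMod_add hp θ hx', mem_Ico,
      left_le_toIcoMod, true_and] using hout n
  have hsub : x' - x ≡ 0 [PMOD p] :=
    modEq_zero_of_toIcoMod_add_lt_iff hp hc (toIcoMod_add_sub_lt_iff_of_forall_nsmul hp hirr horbit)
  have hmod : x ≡ x' [PMOD p] := by simpa using (hsub.add_right x).symm
  calc
    x = toIcoMod hp 0 x := ((toIcoMod_eq_self hp).2 hx).symm
    _ = toIcoMod hp 0 x' := (toIcoMod_inj hp).2 hmod
    _ = x' := (toIcoMod_eq_self hp).2 hx'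

end

/-- The Sturmian system on `[0, 2π)` given by the irrational rotation
`F(x) = x + θ (mod 2π)` with output map `H(x) = 0` if `x ∈ [0, θ)` and `H(x) = 1`
otherwise (where `θ ∈ (0, 2π)` and `θ/(2π)` is irrational) is observable: any two points
`x, x' ∈ [0, 2π)` producing identical output sequences are equal, and in particular
`dist(F^l(x), F^l(x')) → 0` as `l → ∞`. -/
theorem stmt10 (θ : ℝ) (hθ : θ ∈ Set.Ioo 0 (2 * Real.pi))
    (hirr : Irrational (θ / (2 * Real.pi)))
    (F : ℝ → ℝ) (hF : ∀ x, F x = toIcoMod Real.two_pi_pos 0 (x + θ))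
    (H : ℝ → ℕ) (hH : ∀ x, H x = if x ∈ Set.Ico 0 θ then 0 else 1)
    (x x' : ℝ) (hx : x ∈ Set.Ico 0 (2 * Real.pi)) (hx' : x' ∈ Set.Ico 0 (2 * Real.pi))
    (hout : ∀ i : ℕ, H (F^[i] x) = H (F^[i] x')) :
    x = x' ∧
    Tendsto (fun l : ℕ => dist (F^[l] x) (F^[l] x')) atTop (nhds 0) := by
  obtain rfl : x = x' := stmt10_general Real.two_pi_pos hirr hθ hF hx hx' fun i ↦ by grind [hout i]
  exact ⟨rfl, by simp⟩
end
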